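/- Suppose X = X_1 × X_2 ⊆ P^m × P^n with X_1 = {q_1,...,q_{s_1}} and X_2 = {q'_1,...,q'_{s_2}}. Then deg_X(q_k × q'_l) = (deg_{X_1}(q_k), deg_{X_2}(q'_l)) for all k, l, and X has the Cayley-Bacharach property if and only if X_1 and X_2 are Cayley-Bacharach schemes. -/

import Mathlib

/- Common setup: finite sets of points in the multiprojective space
   `P^m x P^n` over a field `K` of characteristic zero, their bihomogeneous
   vanishing ideals, bigraded Hilbert functions, Kähler differents,
   separators, Cayley-Bacharach property and complete intersections. -/

open MvPolynomial

set_option maxHeartbeats 1000000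
set_option synthInstance.maxHeartbeats 400000

noncomputable section

namespace MultiProjPoints

variable (K : Type) [Field K] [CharZero K] [DecidableEq K]

/-- The bigraded coordinate ring `S = K[X_0,…,X_m,Y_0,…,Y_n]` of `P^m × P^n`. -/
abbrev BiRing (m n : ℕ) : Type := MvPolynomial (Fin (m+1) ⊕ Fin (n+1)) K

/-- The weights giving the bigrading: `deg X_i = (1,0)`, `deg Y_j = (0,1)`. -/
def biwt (m n : ℕ) : (Fin (m+1) ⊕ Fin (n+1)) → ℤ × ℤ :=
  Sum.elim (fun _ => ((1 : ℤ), (0 : ℤ))) (fun _ => ((0 : ℤ), (1 : ℤ)))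

variable {m n : ℕ}

/-- A (representative of a) point of `P^m × P^n`. -/
abbrev BiPt (m n : ℕ) : Type := (Fin (m+1) → K) × (Fin (n+1) → K)

/-- `F` is bihomogeneous of degree `d`. -/
def IsBihom (F : BiRing K m n) (d : ℤ × ℤ) : Prop :=
  IsWeightedHomogeneous (biwt m n) F d

/-- Evaluation of a polynomial at (a representative of) a point. -/
def evalB (p : BiPt K m n) (F : BiRing K m n) : K :=
  eval (Sum.elim p.1 p.2) F

/-- A finset of representatives is a good configuration of points of
`P^m × P^n`: all representatives are nonzero, and proportional
representatives coincide (so distinct elements are distinct projective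
points, and images under the two projections behave correctly). -/
def GoodConfig (𝕏 : Finset (BiPt K m n)) : Prop :=
  (∀ p ∈ 𝕏, p.1 ≠ 0 ∧ p.2 ≠ 0) ∧
  (∀ p ∈ 𝕏, ∀ q ∈ 𝕏, (∃ c : K, c ≠ 0 ∧ p.1 = c • q.1) → p.1 = q.1) ∧
  (∀ p ∈ 𝕏, ∀ q ∈ 𝕏, (∃ c : K, c ≠ 0 ∧ p.2 = c • q.2) → p.2 = q.2)

/-- The bihomogeneous vanishing ideal `I_𝕏` of a set of points. -/
def vIdealB (𝕏 : Finset (BiPt K m n)) : Ideal (BiRing K m n) :=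
  Ideal.span {F | (∃ d, IsBihom K F d) ∧ ∀ p ∈ 𝕏, evalB K p F = 0}

/-- The bihomogeneous vanishing ideal of a single point. -/
def ptIdealB (p : BiPt K m n) : Ideal (BiRing K m n) :=
  Ideal.span {F | (∃ d, IsBihom K F d) ∧ evalB K p F = 0}

/-- The degree-`d` piece of `S/I`. -/
def degPieceB (I : Ideal (BiRing K m n)) (d : ℤ × ℤ) :
    Submodule K (BiRing K m n ⧸ I) :=
  (weightedHomogeneousSubmodule K (biwt m n) d).map
    (Ideal.Quotient.mkₐ K I).toLinearMap

/-- The Hilbert function of `S/I`. -/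
def HFI (I : Ideal (BiRing K m n)) (d : ℤ × ℤ) : ℕ :=
  Module.finrank K (degPieceB K I d)

/-- The Hilbert function of a set of points in `P^m × P^n`. -/
def HFB (𝕏 : Finset (BiPt K m n)) (d : ℤ × ℤ) : ℕ :=
  HFI K (vIdealB K 𝕏) d

/-- The Hilbert function of a (bihomogeneous) ideal `J` of `R_𝕏 = S/I`. -/
def HFIdealB (I : Ideal (BiRing K m n)) (J : Ideal (BiRing K m n ⧸ I))
    (d : ℤ × ℤ) : ℕ :=
  Module.finrank K ↥((Submodule.restrictScalars K J) ⊓ degPieceB K I d)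

/- ### Single projective space `P^N` -/

/-- The coordinate ring `K[X_0,…,X_N]` of `P^N`. -/
abbrev PRing (N : ℕ) : Type := MvPolynomial (Fin (N+1)) K

/-- The standard grading on `K[X_0,…,X_N]` (with values in `ℤ`). -/
def wt1 (N : ℕ) : Fin (N+1) → ℤ := fun _ => 1

/-- `F` is homogeneous of degree `d`. -/
def IsHom1 {N : ℕ} (F : PRing K N) (d : ℤ) : Prop :=
  IsWeightedHomogeneous (wt1 N) F d

/-- A good finite set of representatives of points in `P^N`. -/
def GoodSet {N : ℕ} (Y : Finset (Fin (N+1) → K)) : Prop :=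
  (∀ q ∈ Y, q ≠ 0) ∧
  (∀ p ∈ Y, ∀ q ∈ Y, (∃ c : K, c ≠ 0 ∧ p = c • q) → p = q)

/-- The homogeneous vanishing ideal of a set of points in `P^N`. -/
def vIdeal1 {N : ℕ} (Y : Finset (Fin (N+1) → K)) : Ideal (PRing K N) :=
  Ideal.span {F | (∃ d, IsHom1 K F d) ∧ ∀ q ∈ Y, eval q F = 0}

/-- The degree-`d` piece of `K[X_0,…,X_N]/I`. -/
def degPiece1 {N : ℕ} (I : Ideal (PRing K N)) (d : ℤ) :
    Submodule K (PRing K N ⧸ I) :=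
  (weightedHomogeneousSubmodule K (wt1 N) d).map
    (Ideal.Quotient.mkₐ K I).toLinearMap

/-- The Hilbert function of a set of points in `P^N`. -/
def HF1 {N : ℕ} (Y : Finset (Fin (N+1) → K)) (d : ℤ) : ℕ :=
  Module.finrank K (degPiece1 K (vIdeal1 K Y) d)

/-- The Hilbert function of a homogeneous ideal of `K[X_0,…,X_N]/I`. -/
def HFIdeal1 {N : ℕ} (I : Ideal (PRing K N)) (J : Ideal (PRing K N ⧸ I))
    (d : ℤ) : ℕ :=
  Module.finrank K ↥((Submodule.restrictScalars K J) ⊓ degPiece1 K I d)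

/-- The degree `deg_Y(q)` of a point `q` in `Y ⊆ P^N`: the minimal degree of
a homogeneous separator of `q` in `Y`. -/
def deg1 {N : ℕ} (Y : Finset (Fin (N+1) → K)) (q : Fin (N+1) → K) : ℕ :=
  sInf {d : ℕ | ∃ F : PRing K N, IsHom1 K F (d : ℤ) ∧ eval q F ≠ 0 ∧
    ∀ q' ∈ Y, q' ≠ q → eval q' F = 0}

/-- The regularity index of the Hilbert function of `Y ⊆ P^N`. -/
def regIndex1 {N : ℕ} (Y : Finset (Fin (N+1) → K)) : ℕ :=
  sInf {r : ℕ | ∀ i : ℕ, r ≤ i → HF1 K Y (i : ℤ) = Y.card}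

/-- `Y ⊆ P^N` is a Cayley-Bacharach scheme. -/
def IsCB1 {N : ℕ} (Y : Finset (Fin (N+1) → K)) : Prop :=
  ∀ q ∈ Y, deg1 K Y q = regIndex1 K Y

/- ### Kähler differents -/

/-- The variables `X_1,…,X_m,Y_1,…,Y_n` indexed by `Fin (m+n)`. -/
def bvar (m n : ℕ) (v : Fin (m+n)) : Fin (m+1) ⊕ Fin (n+1) :=
  if h : (v : ℕ) < m then Sum.inl ⟨(v : ℕ) + 1, by omega⟩
  else Sum.inr ⟨(v : ℕ) - m + 1, by have hv := v.isLt; omega⟩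

/-- The Kähler different of `R = S/I` w.r.t. a system of generators `F` of
`I`: the ideal generated by the `(m+n)×(m+n)`-minors of the Jacobian matrix
`(∂F_k/∂X_i, ∂F_k/∂Y_j)`. -/
def kdiffB (I : Ideal (BiRing K m n)) {r : ℕ} (F : Fin r → BiRing K m n) :
    Ideal (BiRing K m n ⧸ I) :=
  Ideal.span (Set.range fun ρ : Fin (m+n) → Fin r =>
    Ideal.Quotient.mk I (Matrix.det (Matrix.of fun u v : Fin (m+n) =>
      pderiv (bvar m n v) (F (ρ u)))))

/-- The Kähler different of `K[X_0,…,X_N]/I` w.r.t. a system of generators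
`F` of `I` (minors w.r.t. the variables `X_1,…,X_N`). -/
def kdiff1 {N : ℕ} (I : Ideal (PRing K N)) {r : ℕ} (F : Fin r → PRing K N) :
    Ideal (PRing K N ⧸ I) :=
  Ideal.span (Set.range fun ρ : Fin N → Fin r =>
    Ideal.Quotient.mk I (Matrix.det (Matrix.of fun u v : Fin N =>
      pderiv (Fin.succ v) (F (ρ u)))))

/-- The extension `ϑ_{𝕏₁} R_𝕏` to `R_𝕏 = S/I` of the Kähler different of
`𝕏₁ ⊆ P^m` computed from a system of generators `F` of `I_{𝕏₁}`. -/
def kdiffExtL (I : Ideal (BiRing K m n)) {r : ℕ} (F : Fin r → PRing K m) :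
    Ideal (BiRing K m n ⧸ I) :=
  Ideal.span (Set.range fun ρ : Fin m → Fin r =>
    Ideal.Quotient.mk I (rename Sum.inl (Matrix.det (Matrix.of fun u v : Fin m =>
      pderiv (Fin.succ v) (F (ρ u))))))

/-- The extension `ϑ_{𝕏₂} R_𝕏` to `R_𝕏 = S/I` of the Kähler different of
`𝕏₂ ⊆ P^n` computed from a system of generators `G` of `I_{𝕏₂}`. -/
def kdiffExtR (I : Ideal (BiRing K m n)) {r : ℕ} (G : Fin r → PRing K n) :
    Ideal (BiRing K m n ⧸ I) :=
  Ideal.span (Set.range fun ρ : Fin n → Fin r =>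
    Ideal.Quotient.mk I (rename Sum.inr (Matrix.det (Matrix.of fun u v : Fin n =>
      pderiv (Fin.succ v) (G (ρ u))))))

/- ### Regular sequences, ACM, complete intersections -/

/-- `a, b` form a regular sequence. -/
def RegPair {A : Type*} [CommRing A] (a b : A) : Prop :=
  (∀ z : A, a * z = 0 → z = 0) ∧
  (∀ z : A, b * z ∈ Ideal.span {a} → z ∈ Ideal.span {a})

/-- The image `x₀` of `X_0` in `S/I`. -/
def x0B (I : Ideal (BiRing K m n)) : BiRing K m n ⧸ I :=
  Ideal.Quotient.mk I (MvPolynomial.X (Sum.inl 0))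

/-- The image `y₀` of `Y_0` in `S/I`. -/
def y0B (I : Ideal (BiRing K m n)) : BiRing K m n ⧸ I :=
  Ideal.Quotient.mk I (MvPolynomial.X (Sum.inr 0))

/-- The standing assumption for ACM sets of points: (after a change of
coordinates) `x₀, y₀` form a regular sequence in `R_𝕏`. -/
def ACMxy (𝕏 : Finset (BiPt K m n)) : Prop :=
  RegPair (x0B K (vIdealB K 𝕏)) (y0B K (vIdealB K 𝕏))

/-- `𝕏` is arithmetically Cohen-Macaulay: some bihomogeneous linear forms
`ℓ` of degree `(1,0)` and `ℓ'` of degree `(0,1)` give a regular sequence in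
`R_𝕏` (for points this is equivalent to `depth R_𝕏 = 2`). -/
def IsACM (𝕏 : Finset (BiPt K m n)) : Prop :=
  ∃ l l' : BiRing K m n, IsBihom K l (1, 0) ∧ IsBihom K l' (0, 1) ∧
    RegPair (Ideal.Quotient.mk (vIdealB K 𝕏) l) (Ideal.Quotient.mk (vIdealB K 𝕏) l')

/-- A regular sequence in a commutative ring, given as a list:
each entry is a non-zerodivisor modulo the preceding ones, and the list
generates a proper ideal. -/
def IsRegSeq {A : Type*} [CommRing A] (l : List A) : Prop :=
  (∀ (i : ℕ) (h : i < l.length), ∀ z : A,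
      l.get ⟨i, h⟩ * z ∈ Ideal.span {x | x ∈ l.take i} →
      z ∈ Ideal.span {x | x ∈ l.take i}) ∧
  Ideal.span {x | x ∈ l} ≠ ⊤

/-- `𝕏` is a complete intersection of type `(d_1,…,d_m,d'_1,…,d'_n)`. -/
def IsCIB (𝕏 : Finset (BiPt K m n)) (d : Fin m → ℕ) (d' : Fin n → ℕ) : Prop :=
  ∃ (F : Fin m → BiRing K m n) (G : Fin n → BiRing K m n),
    (∀ i, IsBihom K (F i) ((d i : ℤ), 0)) ∧
    (∀ j, IsBihom K (G j) (0, (d' j : ℤ))) ∧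
    IsRegSeq (List.ofFn F ++ List.ofFn G) ∧
    Ideal.span (Set.range F ∪ Set.range G) = vIdealB K 𝕏

/-- `Y ⊆ P^N` is a complete intersection of type `(d_1,…,d_N)`. -/
def IsCI1 {N : ℕ} (Y : Finset (Fin (N+1) → K)) (d : Fin N → ℕ) : Prop :=
  ∃ F : Fin N → PRing K N,
    (∀ i, IsHom1 K (F i) (d i : ℤ)) ∧
    IsRegSeq (List.ofFn F) ∧
    Ideal.span (Set.range F) = vIdeal1 K Y

/- ### Separators and the Cayley-Bacharach property -/

/-- `F` is a separator of `p` in `𝕏`. -/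
def IsSepB (𝕏 : Finset (BiPt K m n)) (p : BiPt K m n) (F : BiRing K m n) : Prop :=
  evalB K p F ≠ 0 ∧ ∀ q ∈ 𝕏, q ≠ p → evalB K q F = 0

/-- The set of degrees of bihomogeneous separators of `p` in `𝕏`. -/
def sepDegsB (𝕏 : Finset (BiPt K m n)) (p : BiPt K m n) : Set (ℤ × ℤ) :=
  {d | ∃ F, IsBihom K F d ∧ IsSepB K 𝕏 p F}

/-- `deg_𝕏(p)`: the set of degrees of minimal separators of `p` in `𝕏`
(mimimality w.r.t. the componentwise order). -/
def minSepDegsB (𝕏 : Finset (BiPt K m n)) (p : BiPt K m n) : Set (ℤ × ℤ) :=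
  {d ∈ sepDegsB K 𝕏 p | ∀ d' ∈ sepDegsB K 𝕏 p, ¬ d' < d}

/-- `𝕏` has the Cayley-Bacharach property: the Hilbert function of
`𝕏 \ {p}` is independent of the choice of `p ∈ 𝕏`. -/
def HasCB (𝕏 : Finset (BiPt K m n)) : Prop :=
  ∀ p ∈ 𝕏, ∀ q ∈ 𝕏, ∀ d : ℤ × ℤ, HFB K (𝕏.erase p) d = HFB K (𝕏.erase q) d

/- ### Star property and fibres -/

/-- The `(⋆)`-property. -/
def StarProp (𝕏 : Finset (BiPt K m n)) : Prop :=
  ∀ p ∈ 𝕏, ∀ q ∈ 𝕏, ((p.1, q.2) ∈ 𝕏 ∨ (q.1, p.2) ∈ 𝕏)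

/-- `V_j = π₁(π₂⁻¹(q'_j) ∩ 𝕏)` for `q'_j = p.2`. -/
def Vset (𝕏 : Finset (BiPt K m n)) (p : BiPt K m n) : Finset (Fin (m+1) → K) :=
  (𝕏.filter fun q => q.2 = p.2).image Prod.fst

/-- `W_i = π₂(π₁⁻¹(q_i) ∩ 𝕏)` for `q_i = p.1`. -/
def Wset (𝕏 : Finset (BiPt K m n)) (p : BiPt K m n) : Finset (Fin (n+1) → K) :=
  (𝕏.filter fun q => q.1 = p.1).image Prod.snd

end MultiProjPoints

/-
The degree-`d` value of the Hilbert function of a finite set of points is the rank of the evaluation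
functionals at these points on the forms of degree `d`, and a point has a separator of degree `d`
exactly when its functional is not a combination of the others. Hence removing a point lowers the
Hilbert function by one precisely in the degrees of its separators, so the Cayley-Bacharach property
says that all points have the same separator degrees. In `P^N` these degrees form the ray
`[deg_Y(q), ∞)`, and the regularity index is the largest `deg_Y(q)`, so a Cayley-Bacharach scheme is
one where `deg_Y` is constant. On a product, separators restrict to the two slices through the point
and multiply back together, so the separator degrees of `q_k × q'_l` are the quadrant with corner
`(deg_{𝕏₁}(q_k), deg_{𝕏₂}(q'_l))`.
-/

namespace MultiProjPoints

open Module Submodule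

section LinearAlgebra

variable {K V A : Type*} [Field K] [AddCommGroup V] [Module K V] [AddCommGroup A] [Module K A]

theorem mem_span_iff_forall_eq_zero {T : Set (Dual K V)} (hT : T.Finite) {f : Dual K V} :
    f ∈ span K T ↔ ∀ v, (∀ g ∈ T, g v = 0) → f v = 0 := by
  have := FiniteDimensional.span_of_finite K hT
  rw [← Subspace.dualCoannihilator_dualAnnihilator_eq (W := span K T), mem_dualAnnihilator]
  simp only [← SetLike.mem_coe, coe_dualCoannihilator_span, Set.mem_ofPred_eq]

theorem finrank_range_eq_finrank_span {T : Set (Dual K V)} (hT : T.Finite) {f : V →ₗ[K] A}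
    (hf : ∀ v, f v = 0 ↔ ∀ g ∈ T, g v = 0) : finrank K f.range = finrank K (span K T) := by
  have := FiniteDimensional.span_of_finite K hT
  have hker : f.ker = (span K T).dualCoannihilator :=
    SetLike.coe_injective <| by
      rw [coe_dualCoannihilator_span]
      exact Set.ext hf
  calc finrank K f.range
      = finrank K (V ⧸ f.ker) := f.quotKerEquivRange.finrank_eq.symm
    _ = finrank K (V ⧸ (span K T).dualCoannihilator) := by rw [hker]
    _ = finrank K (Dual K (span K T)) := (LinearEquiv.ofBijective _
        (Subspace.quotDualCoannihilatorToDual_bijective (span K T))).finrank_eq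
    _ = finrank K (span K T) := Subspace.dual_finrank_eq (V := span K T)

theorem finrank_span_insert_of_notMem {T : Set V} (hT : T.Finite) {v : V} (hv : v ∉ span K T) :
    finrank K (span K (insert v T)) = finrank K (span K T) + 1 := by
  have := FiniteDimensional.span_of_finite K hT
  have hv₀ : v ≠ 0 := fun h => hv (h ▸ zero_mem _)
  have hdisj : span K {v} ⊓ span K T = ⊥ := (disjoint_span_singleton_of_notMem hv).symm.eq_bot
  have hsum := finrank_sup_add_finrank_inf_eq (span K {v}) (span K T)
  rw [hdisj, finrank_bot, finrank_span_singleton hv₀] at hsum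
  rw [span_insert]
  lia

end LinearAlgebra

section WeightedHomogeneous

variable {R σ τ M N : Type*} [CommSemiring R] [AddCommMonoid M] [AddCommMonoid N]

theorem isWeightedHomogeneous_bind₁ {w : σ → M} {w' : τ → N} (f : M →+ N)
    {g : σ → MvPolynomial τ R} (hg : ∀ i, IsWeightedHomogeneous w' (g i) (f (w i)))
    {F : MvPolynomial σ R} {d : M} (hF : IsWeightedHomogeneous w F d) :
    IsWeightedHomogeneous w' (bind₁ g F) (f d) := by
  rw [← aeval_eq_bind₁, aeval_def, eval₂_eq, algebraMap_eq]
  refine IsWeightedHomogeneous.sum _ _ _ fun e he => IsWeightedHomogeneous.C_mul ?_ _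
  have hdeg : f d = ∑ i ∈ e.support, e i • f (w i) := by
    rw [← hF (mem_support_iff.1 he), Finsupp.weight_apply, Finsupp.sum, map_sum]
    simp only [map_nsmul]
  rw [hdeg]
  exact IsWeightedHomogeneous.prod _ _ _ fun i _ => (hg i).pow _

theorem exists_isWeightedHomogeneous_eval_eq [Finite σ] (c : M) (f : (σ → R) →ₗ[R] R) :
    ∃ F : MvPolynomial σ R, IsWeightedHomogeneous (fun _ => c) F c ∧ ∀ a, eval a F = f a := by
  classical
  cases nonempty_fintype σ
  refine ⟨∑ i, C (f fun j => if i = j then 1 else 0) * X i, ?_, fun a => ?_⟩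
  · exact IsWeightedHomogeneous.sum _ _ _ fun i _ => (isWeightedHomogeneous_X R _ i).C_mul _
  · simp [f.pi_apply_eq_sum_univ a, mul_comm]

theorem weight_nonneg_of_isWeightedHomogeneous {w : σ → ℤ} (hw : ∀ i, 0 ≤ w i)
    {F : MvPolynomial σ R} {d : ℤ} (hF : IsWeightedHomogeneous w F d) (hF₀ : F ≠ 0) : 0 ≤ d := by
  obtain ⟨e, he⟩ := exists_coeff_ne_zero hF₀
  rw [← hF he, Finsupp.weight_apply]
  exact Finset.sum_nonneg fun i _ => nsmul_nonneg (hw i) _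

end WeightedHomogeneous

section Separators

variable {K σ τ ι κ M N : Type*} [Field K] [AddCommMonoid M] [AddCommMonoid N]

/-- The degrees of the separators of the point `x p` in the family `x` of points indexed by `s`,
for the grading of `K[X_i : i ∈ σ]` in which `X_i` has degree `w i`. It specialises to the
separators of both `P^N` and `P^m × P^n`. -/
def separatorDegrees (w : σ → M) (x : ι → σ → K) (s : Set ι) (p : ι) : Set M :=
  {d | ∃ F : MvPolynomial σ K, IsWeightedHomogeneous w F d ∧ eval (x p) F ≠ 0 ∧
    ∀ q ∈ s, q ≠ p → eval (x q) F = 0}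

variable {w : σ → M} {w' : τ → N} {x : ι → σ → K} {y : κ → τ → K} {s s₁ s₂ : Set ι} {t : Set κ}
  {p : ι}

theorem zero_mem_separatorDegrees_empty : 0 ∈ separatorDegrees w x ∅ p :=
  ⟨1, isWeightedHomogeneous_one K w, by simp, by simp⟩

theorem weight_mem_separatorDegrees_empty {i : σ} (hi : x p i ≠ 0) :
    w i ∈ separatorDegrees w x ∅ p :=
  ⟨X i, isWeightedHomogeneous_X K w i, by simpa using hi, by simp⟩

theorem add_mem_separatorDegrees {d e : M} (hd : d ∈ separatorDegrees w x s₁ p)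
    (he : e ∈ separatorDegrees w x s₂ p) (hs : ∀ q ∈ s, q ≠ p → q ∈ s₁ ∨ q ∈ s₂) :
    d + e ∈ separatorDegrees w x s p := by
  obtain ⟨F, hF, hFp, hFs⟩ := hd
  obtain ⟨G, hG, hGp, hGs⟩ := he
  refine ⟨F * G, hF.mul hG, ?_, fun q hq hqp => ?_⟩
  · rw [map_mul]
    exact mul_ne_zero hFp hGp
  · rw [map_mul, mul_eq_zero]
    exact (hs q hq hqp).imp (hFs q · hqp) (hGs q · hqp)

theorem separatorDegrees_nonempty (hs : s.Finite)
    (h : ∀ q ∈ s, q ≠ p → (separatorDegrees w x {q} p).Nonempty) :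
    (separatorDegrees w x s p).Nonempty := by
  induction s, hs using Set.Finite.induction_on with
  | empty => exact ⟨0, zero_mem_separatorDegrees_empty⟩
  | @insert q s _ _ ih =>
    obtain ⟨d, hd⟩ := ih fun q' hq' => h q' (Set.mem_insert_of_mem q hq')
    by_cases hqp : q = p
    · refine ⟨d + 0, add_mem_separatorDegrees hd zero_mem_separatorDegrees_empty ?_⟩
      rintro q' (rfl | hq') hne
      exacts [absurd hqp hne, Or.inl hq']
    · obtain ⟨e, he⟩ := h q (Set.mem_insert q s) hqp
      exact ⟨e + d, add_mem_separatorDegrees he hd fun q' hq' _ => hq'⟩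

-- Separators are pulled back along the polynomial map `g`, which sends `y k` to `x (φ k)`.
theorem map_mem_separatorDegrees (f : M →+ N) (g : σ → MvPolynomial τ K)
    (hg : ∀ i, IsWeightedHomogeneous w' (g i) (f (w i))) (φ : κ → ι)
    (hφ : ∀ k i, eval (y k) (g i) = x (φ k) i) {q : κ}
    (hts : ∀ k ∈ t, k ≠ q → φ k ∈ s ∧ φ k ≠ φ q) {d : M}
    (hd : d ∈ separatorDegrees w x s (φ q)) : f d ∈ separatorDegrees w' y t q := by
  obtain ⟨F, hF, hFq, hFs⟩ := hd
  have heval (k : κ) : eval (y k) (bind₁ g F) = eval (x (φ k)) F := by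
    simp only [← coe_aeval_eq_eval, RingHom.coe_coe, aeval_bind₁] at hφ ⊢
    rw [funext (hφ k)]
  refine ⟨bind₁ g F, isWeightedHomogeneous_bind₁ f hg hF, ?_, fun k hk hkq => ?_⟩
  · rwa [heval]
  · rw [heval]
    exact hFs _ (hts k hk hkq).1 (hts k hk hkq).2

theorem separatorDegrees_prod {p : ι × κ} (hp : p ∈ s ×ˢ t) :
    separatorDegrees (Sum.elim (fun i => (w i, (0 : N))) (fun j => ((0 : M), w' j)))
      (fun q : ι × κ => Sum.elim (x q.1) (y q.2)) (s ×ˢ t) p =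
      separatorDegrees w x s p.1 ×ˢ separatorDegrees w' y t p.2 := by
  ext ⟨d, e⟩
  constructor
  · intro h
    constructor
    · refine map_mem_separatorDegrees (AddMonoidHom.fst M N)
        (Sum.elim X fun j => C (y p.2 j)) ?_ (fun i => (i, p.2)) ?_ (fun i hi hne => ?_) h
      · rintro (i | j)
        exacts [isWeightedHomogeneous_X K w i, isWeightedHomogeneous_C w _]
      · rintro i (_ | _) <;> simp
      · exact ⟨⟨hi, hp.2⟩, fun h => hne (congrArg Prod.fst h)⟩
    · refine map_mem_separatorDegrees (AddMonoidHom.snd M N)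
        (Sum.elim (fun i => C (x p.1 i)) X) ?_ (fun k => (p.1, k)) ?_ (fun k hk hne => ?_) h
      · rintro (i | j)
        exacts [isWeightedHomogeneous_C w' _, isWeightedHomogeneous_X K w' j]
      · rintro k (_ | _) <;> simp
      · exact ⟨⟨hp.1, hk⟩, fun h => hne (congrArg Prod.snd h)⟩
  · rintro ⟨hd, he⟩
    have hd' := map_mem_separatorDegrees (t := {q : ι × κ | q.1 ∈ s ∧ q.1 ≠ p.1})
      (w' := Sum.elim (fun i => (w i, (0 : N))) (fun j => ((0 : M), w' j)))
      (y := fun q : ι × κ => Sum.elim (x q.1) (y q.2)) (AddMonoidHom.inl M N)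
      (fun i => X (Sum.inl i)) (fun i => isWeightedHomogeneous_X K _ (Sum.inl i)) Prod.fst
      (fun _ _ => by simp) (fun _ hq _ => hq) hd
    have he' := map_mem_separatorDegrees (t := {q : ι × κ | q.2 ∈ t ∧ q.2 ≠ p.2})
      (w' := Sum.elim (fun i => (w i, (0 : N))) (fun j => ((0 : M), w' j)))
      (y := fun q : ι × κ => Sum.elim (x q.1) (y q.2)) (AddMonoidHom.inr M N)
      (fun j => X (Sum.inr j)) (fun j => isWeightedHomogeneous_X K _ (Sum.inr j)) Prod.snd
      (fun _ _ => by simp) (fun _ hq _ => hq) he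
    simpa using add_mem_separatorDegrees hd' he' fun q hq hqp =>
      (not_and_or.1 (mt Prod.ext_iff.2 hqp)).imp (⟨hq.1, ·⟩) (⟨hq.2, ·⟩)

end Separators

section HilbertFunction

variable {K σ ι M : Type*} [Field K] [AddCommMonoid M]

/-- The ideal generated by the homogeneous polynomials, for the grading in which `X_i` has degree
`w i`, that vanish at the points `x p` with `p ∈ s`. It specialises to the vanishing ideals of
finite sets of points of both `P^N` and `P^m × P^n`. -/
def homogeneousVanishingIdeal (w : σ → M) (x : ι → σ → K) (s : Set ι) :
    Ideal (MvPolynomial σ K) :=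
  Ideal.span {F | (∃ d, IsWeightedHomogeneous w F d) ∧ ∀ p ∈ s, eval (x p) F = 0}

/-- The Hilbert function of the coordinate ring of the points `x p` with `p ∈ s`. -/
def hilbertFunction (w : σ → M) (x : ι → σ → K) (s : Set ι) (d : M) : ℕ :=
  finrank K ((weightedHomogeneousSubmodule K w d).map
    (Ideal.Quotient.mkₐ K (homogeneousVanishingIdeal w x s)).toLinearMap)

/-- Evaluation at `a`, as a linear functional on the homogeneous polynomials of degree `d`. -/
def evalForm (w : σ → M) (d : M) (a : σ → K) : Dual K (weightedHomogeneousSubmodule K w d) :=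
  (aeval a).toLinearMap.domRestrict _

variable {w : σ → M} {x : ι → σ → K} {s : Set ι} {p q : ι} {d : M}

theorem evalForm_apply (a : σ → K) (F : weightedHomogeneousSubmodule K w d) :
    evalForm w d a F = eval a (F : MvPolynomial σ K) := by
  simp [evalForm, aeval_eq_eval]

theorem mem_homogeneousVanishingIdeal {F : MvPolynomial σ K} (hF : IsWeightedHomogeneous w F d) :
    F ∈ homogeneousVanishingIdeal w x s ↔ ∀ p ∈ s, eval (x p) F = 0 := by
  refine ⟨fun h p hp => ?_, fun h => Ideal.subset_span ⟨⟨d, hF⟩, h⟩⟩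
  have hle : homogeneousVanishingIdeal w x s ≤ RingHom.ker (eval (x p)) :=
    Ideal.span_le.2 fun G hG => hG.2 p hp
  exact hle h

theorem hilbertFunction_eq_finrank_span (hs : s.Finite) :
    hilbertFunction w x s d = finrank K (span K ((fun p => evalForm w d (x p)) '' s)) := by
  rw [hilbertFunction, ← LinearMap.range_domRestrict]
  refine finrank_range_eq_finrank_span (hs.image _) fun F => ?_
  simp only [Set.forall_mem_image, evalForm_apply]
  exact Ideal.Quotient.eq_zero_iff_mem.trans (mem_homogeneousVanishingIdeal F.2)

theorem mem_separatorDegrees_iff_notMem_span (hs : s.Finite) :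
    d ∈ separatorDegrees w x s p ↔
      evalForm w d (x p) ∉ span K ((fun p => evalForm w d (x p)) '' (s \ {p})) := by
  rw [mem_span_iff_forall_eq_zero (hs.sdiff.image _)]
  simp only [separatorDegrees, Set.mem_ofPred_eq, Set.forall_mem_image, evalForm_apply,
    Subtype.forall, mem_weightedHomogeneousSubmodule, Set.mem_sdiff, Set.mem_singleton_iff,
    not_forall, exists_prop, and_imp]
  exact exists_congr fun F => and_congr_right fun _ => and_comm

open Classical in
theorem hilbertFunction_eq_hilbertFunction_sdiff_singleton_add (hs : s.Finite) (hp : p ∈ s) :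
    hilbertFunction w x s d =
      hilbertFunction w x (s \ {p}) d + if d ∈ separatorDegrees w x s p then 1 else 0 := by
  have himage : (fun p => evalForm w d (x p)) '' s =
      insert (evalForm w d (x p)) ((fun p => evalForm w d (x p)) '' (s \ {p})) := by
    conv_lhs => rw [← Set.insert_sdiff_self_of_mem hp, Set.image_insert_eq]
  rw [hilbertFunction_eq_finrank_span hs, hilbertFunction_eq_finrank_span hs.sdiff, himage]
  split_ifs with hd <;> rw [mem_separatorDegrees_iff_notMem_span hs] at hd
  · exact finrank_span_insert_of_notMem (hs.sdiff.image _) hd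
  · rw [span_insert_eq_span (not_not.1 hd), add_zero]

theorem hilbertFunction_sdiff_singleton_eq_iff (hs : s.Finite) (hp : p ∈ s) (hq : q ∈ s) :
    (∀ d, hilbertFunction w x (s \ {p}) d = hilbertFunction w x (s \ {q}) d) ↔
      separatorDegrees w x s p = separatorDegrees w x s q := by
  classical
  rw [Set.ext_iff]
  refine forall_congr' fun d => ?_
  have hdrop_p := hilbertFunction_eq_hilbertFunction_sdiff_singleton_add
    (w := w) (x := x) (d := d) hs hp
  have hdrop_q := hilbertFunction_eq_hilbertFunction_sdiff_singleton_add
    (w := w) (x := x) (d := d) hs hq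
  grind

theorem hilbertFunction_eq_ncard_iff (hs : s.Finite) :
    hilbertFunction w x s d = s.ncard ↔ ∀ p ∈ s, d ∈ separatorDegrees w x s p := by
  have := hs.fintype
  simp only [mem_separatorDegrees_iff_notMem_span hs, ← linearIndepOn_iff_notMem_span]
  rw [hilbertFunction_eq_finrank_span hs, LinearIndepOn, linearIndependent_iff_card_eq_finrank_span,
    Set.image_eq_range, ← Nat.card_coe_set_eq, Nat.card_eq_fintype_card, eq_comm, Set.finrank]

end HilbertFunction

section ProjectiveSpace

variable {K : Type} [Field K] {N : ℕ} {Y : Finset (Fin (N + 1) → K)} {p q : Fin (N + 1) → K}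

theorem one_mem_separatorDegrees_singleton (hpq : p ∉ span K {q}) :
    1 ∈ separatorDegrees (wt1 N) id {q} p := by
  obtain ⟨f, hfp, hfq⟩ := exists_le_ker_of_notMem hpq
  obtain ⟨F, hF, heval⟩ := exists_isWeightedHomogeneous_eval_eq (1 : ℤ) f
  refine ⟨F, hF, by rwa [id, heval], ?_⟩
  rintro _ rfl -
  rw [id, heval]
  exact hfq (mem_span_singleton_self _)

theorem notMem_span_singleton (hY : GoodSet K Y) (hp : p ∈ Y) (hq : q ∈ Y) (hpq : p ≠ q) :
    p ∉ span K {q} := by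
  rw [mem_span_singleton]
  rintro ⟨c, rfl⟩
  exact hpq (hY.2 _ hp _ hq ⟨c, left_ne_zero_of_smul (hY.1 _ hp), rfl⟩)

theorem separatorDegrees_eq_Ici_deg1 (hY : GoodSet K Y) (hq : q ∈ Y) :
    separatorDegrees (wt1 N) id (Y : Set (Fin (N + 1) → K)) q = Set.Ici (deg1 K Y q : ℤ) := by
  have hnonneg : ∀ d ∈ separatorDegrees (wt1 N) id (Y : Set (Fin (N + 1) → K)) q, 0 ≤ d := by
    rintro d ⟨F, hF, hFq, -⟩
    exact weight_nonneg_of_isWeightedHomogeneous (fun _ => zero_le_one) hF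
      fun h => hFq (by rw [h, map_zero])
  have hdeg : (deg1 K Y q : ℤ) ∈ separatorDegrees (wt1 N) id (Y : Set (Fin (N + 1) → K)) q := by
    obtain ⟨d, hd⟩ := separatorDegrees_nonempty (w := wt1 N) (x := id) (p := q) Y.finite_toSet
      fun q' hq' hne => ⟨1, one_mem_separatorDegrees_singleton
        (notMem_span_singleton hY hq hq' hne.symm)⟩
    lift d to ℕ using hnonneg d hd
    exact Nat.sInf_mem (s := {d : ℕ | (d : ℤ) ∈ separatorDegrees (wt1 N) id _ q}) ⟨d, hd⟩
  ext d
  refine ⟨fun hd => ?_, fun hd => ?_⟩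
  · lift d to ℕ using hnonneg d hd
    exact Int.ofNat_le.2 (Nat.sInf_le hd)
  · obtain ⟨i, hi⟩ := Function.ne_iff.1 (hY.1 q hq)
    induction d, hd using Int.leInduction with
    | base => exact hdeg
    | succ d _ ih =>
      exact add_mem_separatorDegrees ih (weight_mem_separatorDegrees_empty hi)
        fun _ hq' _ => Or.inl hq'

theorem HF1_eq_card_iff (hY : GoodSet K Y) (d : ℕ) :
    HF1 K Y d = Y.card ↔ ∀ q ∈ Y, deg1 K Y q ≤ d := by
  rw [← Set.ncard_coe_finset]
  refine (hilbertFunction_eq_ncard_iff (w := wt1 N) (x := id) Y.finite_toSet).trans ?_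
  refine forall₂_congr fun q hq => ?_
  rw [separatorDegrees_eq_Ici_deg1 hY hq, Set.mem_Ici, Nat.cast_le]

theorem regIndex1_eq_sup_deg1 (hY : GoodSet K Y) : regIndex1 K Y = Y.sup (deg1 K Y) := by
  have hset : {r : ℕ | ∀ i : ℕ, r ≤ i → HF1 K Y i = Y.card} = Set.Ici (Y.sup (deg1 K Y)) := by
    ext r
    simp only [HF1_eq_card_iff hY, ← Finset.sup_le_iff, Set.mem_ofPred_eq, Set.mem_Ici]
    exact ⟨fun h => h r le_rfl, fun h i hi => h.trans hi⟩
  rw [regIndex1, hset, csInf_Ici]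

theorem isCB1_iff (hY : GoodSet K Y) :
    IsCB1 K Y ↔ ∀ p ∈ Y, ∀ q ∈ Y, deg1 K Y p = deg1 K Y q := by
  refine ⟨fun h p hp q hq => (h p hp).trans (h q hq).symm, fun h q hq => ?_⟩
  rw [regIndex1_eq_sup_deg1 hY]
  exact le_antisymm (Finset.le_sup hq) (Finset.sup_le fun p hp => (h p hp q hq).le)

end ProjectiveSpace

section BiprojectiveSpace

variable {K : Type} [Field K] {m n : ℕ} {𝕏 : Finset (BiPt K m n)}
  {Y : Finset (Fin (m + 1) → K)} {Z : Finset (Fin (n + 1) → K)} {p : BiPt K m n}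

theorem hasCB_iff [DecidableEq K] :
    HasCB K 𝕏 ↔ ∀ p ∈ 𝕏, ∀ q ∈ 𝕏, sepDegsB K 𝕏 p = sepDegsB K 𝕏 q := by
  refine forall₂_congr fun p hp => forall₂_congr fun q hq => ?_
  have := hilbertFunction_sdiff_singleton_eq_iff (w := biwt m n)
    (x := fun p : BiPt K m n => Sum.elim p.1 p.2) 𝕏.finite_toSet hp hq
  rwa [← Finset.coe_erase, ← Finset.coe_erase] at this

theorem sepDegsB_product (hY : GoodSet K Y) (hZ : GoodSet K Z) (hp : p ∈ Y ×ˢ Z) :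
    sepDegsB K (Y ×ˢ Z) p = Set.Ici ((deg1 K Y p.1 : ℤ), (deg1 K Z p.2 : ℤ)) := by
  obtain ⟨hp₁, hp₂⟩ := Finset.mem_product.1 hp
  have := separatorDegrees_prod (w := wt1 m) (w' := wt1 n) (x := id) (y := id)
    (s := (Y : Set (Fin (m + 1) → K))) (t := (Z : Set (Fin (n + 1) → K))) (p := p) ⟨hp₁, hp₂⟩
  rw [← Finset.coe_product, separatorDegrees_eq_Ici_deg1 hY hp₁,
    separatorDegrees_eq_Ici_deg1 hZ hp₂, Set.Ici_prod_Ici] at this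
  exact this

theorem minSepDegsB_eq_singleton {d : ℤ × ℤ} (h : sepDegsB K 𝕏 p = Set.Ici d) :
    minSepDegsB K 𝕏 p = {d} := by
  ext e
  rw [minSepDegsB, h, Set.mem_singleton_iff, ← isLeast_Ici.minimal_iff, minimal_iff_forall_lt]
  exact and_congr_right fun _ => forall_congr' fun _ => imp_not_comm

variable [DecidableEq K]

theorem GoodConfig.goodSet_image_fst (h : GoodConfig K 𝕏) : GoodSet K (𝕏.image Prod.fst) := by
  simp only [GoodSet, Finset.forall_mem_image]
  exact ⟨fun p hp => (h.1 p hp).1, fun p hp q hq => h.2.1 p hp q hq⟩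

theorem GoodConfig.goodSet_image_snd (h : GoodConfig K 𝕏) : GoodSet K (𝕏.image Prod.snd) := by
  simp only [GoodSet, Finset.forall_mem_image]
  exact ⟨fun p hp => (h.1 p hp).2, fun p hp q hq => h.2.2 p hp q hq⟩

end BiprojectiveSpace

end MultiProjPoints

open MultiProjPoints in
theorem statement_14_general (K : Type) [Field K] [DecidableEq K] (m n : ℕ)
    (𝕏 : Finset (BiPt K m n)) (hgood : GoodConfig K 𝕏)
    (hprod : 𝕏 = (𝕏.image Prod.fst) ×ˢ (𝕏.image Prod.snd)) :
    (∀ p ∈ 𝕏, minSepDegsB K 𝕏 p =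
      {((deg1 K (𝕏.image Prod.fst) p.1 : ℤ), (deg1 K (𝕏.image Prod.snd) p.2 : ℤ))}) ∧
    (HasCB K 𝕏 ↔ IsCB1 K (𝕏.image Prod.fst) ∧ IsCB1 K (𝕏.image Prod.snd)) := by
  have hY := hgood.goodSet_image_fst
  have hZ := hgood.goodSet_image_snd
  have hdeg : ∀ p ∈ 𝕏, sepDegsB K 𝕏 p = Set.Ici ((deg1 K (𝕏.image Prod.fst) p.1 : ℤ),
      (deg1 K (𝕏.image Prod.snd) p.2 : ℤ)) := by
    intro p hp
    rw [hprod] at hp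
    have := sepDegsB_product hY hZ hp
    rwa [← hprod] at this
  refine ⟨fun p hp => minSepDegsB_eq_singleton (hdeg p hp), ?_⟩
  rw [hasCB_iff, isCB1_iff hY, isCB1_iff hZ]
  simp only [Finset.forall_mem_image, ← forall_and]
  refine forall₂_congr fun p hp => forall₂_congr fun q hq => ?_
  rw [hdeg p hp, hdeg q hq, Set.Ici_inj, Prod.mk.injEq, Nat.cast_inj, Nat.cast_inj]

open MultiProjPoints in
/-- Proposition 4.12: if `𝕏 = 𝕏₁ × 𝕏₂ ⊆ P^m × P^n` then
`deg_𝕏(q_k × q'_l) = (deg_{𝕏₁}(q_k), deg_{𝕏₂}(q'_l))` for all `k, l`, and `𝕏`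
has the Cayley-Bacharach property iff `𝕏₁` and `𝕏₂` are Cayley-Bacharach
schemes. -/
theorem statement_14 (K : Type) [Field K] [CharZero K] [DecidableEq K]
    (m n : ℕ) (𝕏 : Finset (BiPt K m n)) (hgood : GoodConfig K 𝕏)
    (hne : 𝕏.Nonempty)
    (hprod : 𝕏 = (𝕏.image Prod.fst) ×ˢ (𝕏.image Prod.snd)) :
    (∀ p ∈ 𝕏, minSepDegsB K 𝕏 p =
      {((deg1 K (𝕏.image Prod.fst) p.1 : ℤ),
        (deg1 K (𝕏.image Prod.snd) p.2 : ℤ))}) ∧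
    (HasCB K 𝕏 ↔ IsCB1 K (𝕏.image Prod.fst) ∧ IsCB1 K (𝕏.image Prod.snd)) :=
  statement_14_general K m n 𝕏 hgood hprod
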